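/- For every 1 ≤ i ≤ 3 and every 4 ≤ j ≤ 6, the maps f_i and f_j commute: f_i ∘ f_j = f_j ∘ f_i as maps A^ℤ → A^ℤ. -/

import Mathlib

/-!
Each `g i b c` applies to `b` the transposition `σᵢ` exchanging `a i` and `ta i` if the neighbour `c`
lies in a set `Tᵢ` of triggering symbols, and fixes `b` otherwise (`g_eq`). When `i ≤ 3 < j`, the
transpositions `σᵢ` and `σⱼ` have disjoint supports, hence commute (`sw_comm`), and `σⱼ` fixes
every element of `Tᵢ`, which consists of `#` and letters `a k` with `k ≤ 3`. So applying `f j` does not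
change which positions are triggered for `f i` (`trig_g_iff`), and vice versa; at each position both
composites perform the same subset of the two commuting transpositions.
-/

/-- The alphabet: 13 symbols, `a i` for `1 ≤ i ≤ 6` are positions `0..5`,
`ta i` (the tilde symbols) are positions `6..11`, and `hash` is position `12`. -/
abbrev A : Type := Fin 13

def a (i : ℕ) : A := if h : 1 ≤ i ∧ i ≤ 6 then ⟨i - 1, by omega⟩ else ⟨0, by omega⟩

def ta (i : ℕ) : A := if h : 1 ≤ i ∧ i ≤ 6 then ⟨i + 5, by omega⟩ else ⟨0, by omega⟩

def hash : A := ⟨12, by omega⟩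

/-- The two-sided shift. -/
def shiftZ {B : Type*} (x : ℤ → B) : ℤ → B := fun n => x (n + 1)

/-- The one-sided shift. -/
def shift1 {B : Type*} (x : ℕ → B) : ℕ → B := fun n => x (n + 1)

open Classical in
/-- The map `g i : A × A → A`. -/
noncomputable def g (i : ℕ) (b c : A) : A :=
  if b = a i ∧ (c = hash ∨ ∃ j : ℕ, (if i ≤ 3 then 1 else 4) ≤ j ∧
      j ≤ (if i ≤ 3 then 3 else 6) ∧ j ≠ i ∧ c = a j) then ta i
  else if b = ta i ∧ (c = hash ∨ ∃ j : ℕ, (if i ≤ 3 then 1 else 4) ≤ j ∧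
      j ≤ (if i ≤ 3 then 3 else 6) ∧ j ≠ i ∧ c = a j) then a i
  else b

/-- The map `f i : A^ℤ → A^ℤ`, `f i x k = g i (x k) (x (k+1))`. -/
noncomputable def f (i : ℕ) : (ℤ → A) → (ℤ → A) := fun x k => g i (x k) (x (k + 1))

/-- A (two-sided) subshift: nonempty, closed and shift-invariant. -/
def IsSubshift {B : Type*} [TopologicalSpace B] (X : Set (ℤ → B)) : Prop :=
  X.Nonempty ∧ IsClosed X ∧ shiftZ '' X = X

/-- The cylinder `[#w#]`. -/
def cyl (w : List A) : Set (ℤ → A) :=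
  {x | x 0 = hash ∧ (∀ k : ℕ, k < w.length → x (1 + (k : ℤ)) = w.getD k hash) ∧
    x (1 + (w.length : ℤ)) = hash}

/-- The word map `f i *` representing `f i`. -/
noncomputable def fstar (i : ℕ) : List A → List A
  | [] => []
  | [b] => [g i b hash]
  | b :: c :: rest => g i b c :: fstar i (c :: rest)

/-- Composition `f_{l₀} ∘ f_{l₁} ∘ ⋯`. -/
noncomputable def fcomp (l : List ℕ) : (ℤ → A) → (ℤ → A) :=
  l.foldr (fun i F => f i ∘ F) id

/-- The binary code word of length 22 associated to each symbol. -/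
def rhoWord (s : A) : List Bool :=
  if (s : ℕ) < 6 then
    [true, true, false, true, false, false] ++ List.replicate (2 * (6 - (s : ℕ))) false
      ++ [true, true] ++ List.replicate (2 * ((s : ℕ) + 1)) false
  else if (s : ℕ) < 12 then
    [true, true, false, true, false, false, true, true]
      ++ List.replicate (2 * (11 - (s : ℕ))) false
      ++ [true, true] ++ List.replicate (2 * ((s : ℕ) - 5)) false
  else List.replicate 10 true ++ [false, true] ++ List.replicate 10 true

/-- `rho s r` is the `r`-th letter of the code word of `s`. -/
def rho (s : A) (r : ℕ) : Bool := (rhoWord s).getD r false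

/-- `ρ⁺(x)` : the concatenation `ρ(x 0) ρ(x 1) ρ(x 2) ⋯`. -/
def rhoPlus (x : ℤ → A) : ℕ → Bool := fun n => rho (x ((n / 22 : ℕ) : ℤ)) (n % 22)

/-- `φ(X) = ⋃_{0 ≤ n < 22} Sⁿ({ρ⁺(x) : x ∈ X})`. -/
def phi (X : Set (ℤ → A)) : Set (ℕ → Bool) :=
  ⋃ n < 22, shift1^[n] '' (rhoPlus '' X)

/-- The set `Tᵢ` of right neighbours on which `g i` acts: `#` and the letters `a k` with `k ≠ i` in
the block (`1..3` or `4..6`) of `i`. -/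
def Trig (i : ℕ) (c : A) : Prop :=
  c = hash ∨ ∃ j : ℕ, (if i ≤ 3 then 1 else 4) ≤ j ∧
      j ≤ (if i ≤ 3 then 3 else 6) ∧ j ≠ i ∧ c = a j

/-- The transposition `σᵢ` exchanging `a i` and `ta i`. -/
def sw (i : ℕ) : Equiv.Perm A := Equiv.swap (a i) (ta i)

open Classical in
lemma g_eq (i : ℕ) (b c : A) : g i b c = if Trig i c then sw i b else b := by
  by_cases h : Trig i c
  · rw [if_pos h, sw, Equiv.swap_apply_def]
    unfold Trig at h
    simp only [g, h, and_true]
  · rw [if_neg h]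
    unfold Trig at h
    simp only [g, h, and_false, if_false]

lemma sw_hash (j : ℕ) (h1 : 1 ≤ j) (h6 : j ≤ 6) : sw j hash = hash := by
  interval_cases j <;> decide

lemma sw_a (j k : ℕ) (h1 : 1 ≤ j) (h6 : j ≤ 6) (k1 : 1 ≤ k) (k6 : k ≤ 6) (h : k ≠ j) :
    sw j (a k) = a k := by
  apply Equiv.swap_apply_of_ne_of_ne <;>
    simp only [a, ta, h1, h6, k1, k6, and_self, dite_true, ne_eq, Fin.mk.injEq] <;> omega

lemma sw_ta (j k : ℕ) (h1 : 1 ≤ j) (h6 : j ≤ 6) (k1 : 1 ≤ k) (k6 : k ≤ 6) (h : k ≠ j) :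
    sw j (ta k) = ta k := by
  apply Equiv.swap_apply_of_ne_of_ne <;>
    simp only [a, ta, h1, h6, k1, k6, and_self, dite_true, ne_eq, Fin.mk.injEq] <;> omega

lemma sw_comm (i j : ℕ) (hi1 : 1 ≤ i) (hi6 : i ≤ 6) (hj1 : 1 ≤ j) (hj6 : j ≤ 6) (h : i ≠ j)
    (b : A) : sw i (sw j b) = sw j (sw i b) := by
  -- Conjugating `σᵢ` by `σⱼ` gives the transposition of the images, which are fixed by `σⱼ`.
  have key := Equiv.mul_swap_eq_swap_mul (sw j) (a i) (ta i)
  rw [sw_a j i hj1 hj6 hi1 hi6 h, sw_ta j i hj1 hj6 hi1 hi6 h] at key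
  exact (congrArg (fun p : Equiv.Perm A => p b) key).symm

/-- The transposition of an index in the other block preserves `Tᵢ`, because it fixes all elements
of `Tᵢ`. -/
lemma trig_sw_iff (i j : ℕ) (hj1 : 1 ≤ j) (hj6 : j ≤ 6)
    (h : ¬(i ≤ 3 ↔ j ≤ 3)) (c : A) : Trig i (sw j c) ↔ Trig i c := by
  have fixed : ∀ d, Trig i d → sw j d = d := by
    rintro d (rfl | ⟨k, hk, hk', -, rfl⟩)
    · exact sw_hash j hj1 hj6
    · apply sw_a j k hj1 hj6 <;> split_ifs at hk hk' <;> omega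
  constructor
  · intro hc
    rwa [(sw j).injective (fixed _ hc)] at hc
  · intro hc
    rwa [fixed _ hc]

lemma trig_g_iff (i j : ℕ) (hj1 : 1 ≤ j) (hj6 : j ≤ 6)
    (h : ¬(i ≤ 3 ↔ j ≤ 3)) (c d : A) : Trig i (g j c d) ↔ Trig i c := by
  rw [g_eq]
  split_ifs
  · exact trig_sw_iff i j hj1 hj6 h c
  · rfl

/-- For every `1 ≤ i ≤ 3` and `4 ≤ j ≤ 6`, the maps `f i` and `f j` commute. -/
theorem stmt3 : ∀ i : ℕ, 1 ≤ i → i ≤ 3 → ∀ j : ℕ, 4 ≤ j → j ≤ 6 →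
    f i ∘ f j = f j ∘ f i := by
  intro i hi1 hi3 j hj4 hj6
  funext x k
  simp only [Function.comp_apply, f]
  generalize x k = b, x (k + 1) = c, x (k + 1 + 1) = d
  rw [g_eq i (g j b c), g_eq j (g i b c)]
  have hi := trig_g_iff i j (by omega) hj6 (by omega) c d
  have hj := trig_g_iff j i hi1 (by omega) (by omega) c d
  classical
  rw [if_congr hi rfl rfl, if_congr hj rfl rfl]
  rw [g_eq j b c, g_eq i b c]
  split_ifs
  · exact sw_comm i j hi1 (by omega) (by omega) hj6 (by omega) b
  all_goals rfl
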